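/- arXiv:1506.06583 — 3 statements merged into one kernel-verified Lean document; each statement's English description precedes it below -/
import Mathlib

section
/- Let S be a nonempty bounded subset of ℝ³ and for ε > 0 set Θ_ε = {x ∈ ℝ³ : dist(x,S) < ε}. Let R > 1 be such that Θ₁ is contained in the ball of radius R centered at the origin. Then for every δ ∈ (0,1] and every α < 0 one has ∫_{ℝ³∖Θ_δ} e^{α·dist(x,S)} dx ≤ 8π e^{αR} (1 - 2αR + 2α²R²)/(-α)³ + (32π/3) R³ e^{αδ}. -/
open MeasureTheory Metric Real

/-! Outside `Θ_δ` the integrand is at most `e^{αδ}`. If `S` lies in the ball of radius `R` about the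
origin then `dist(x,S) ≥ |x| - R`, so the integrand is also at most the radial function
`e^{α(|x| - R)}`. The first bound is integrated over the ball of radius `2R`; the second is
integrated over its complement in polar coordinates, which leaves an incomplete Gamma integral. -/

section ExponentialTail

variable {b : ℝ}

lemma integrableOn_Ioi_pow_mul_exp_neg_mul (hb : 0 < b) (n : ℕ) (a : ℝ) :
    IntegrableOn (fun r : ℝ ↦ r ^ n * exp (-b * r)) (Set.Ioi a) := by
  refine integrable_of_isBigO_exp_neg (half_pos hb) (by fun_prop) ?_
  have hpow := (isLittleO_pow_exp_pos_mul_atTop n (half_pos hb)).isBigO.mul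
    (Asymptotics.isBigO_refl (fun r : ℝ ↦ exp (-b * r)) Filter.atTop)
  refine hpow.congr_right fun r ↦ ?_
  rw [← exp_add]
  ring_nf

lemma integral_Ioi_pow_succ_mul_exp_neg_mul (hb : 0 < b) (n : ℕ) (a : ℝ) :
    ∫ r in Set.Ioi a, r ^ (n + 1) * exp (-b * r) =
      ((n + 1) * (∫ r in Set.Ioi a, r ^ n * exp (-b * r)) + a ^ (n + 1) * exp (-b * a)) / b := by
  have hderiv (r : ℝ) : HasDerivAt (fun r : ℝ ↦ r ^ (n + 1) * exp (-b * r))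
      ((n + 1) * (r ^ n * exp (-b * r)) - b * (r ^ (n + 1) * exp (-b * r))) r := by
    convert! (hasDerivAt_pow (n + 1) r).mul ((hasDerivAt_id r).const_mul (-b)).exp using 1
    simp only [id, Nat.cast_add, Nat.cast_one, Nat.add_sub_cancel]
    ring
  have hint := (integrableOn_Ioi_pow_mul_exp_neg_mul hb n a).const_mul ((n : ℝ) + 1)
  have hint_succ := integrableOn_Ioi_pow_mul_exp_neg_mul hb (n + 1) a
  have htendsto := tendsto_zero_of_hasDerivAt_of_integrableOn_Ioi (fun r _ ↦ hderiv r)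
    (hint.sub (hint_succ.const_mul b)) hint_succ
  have hFTC := integral_Ioi_of_hasDerivAt_of_tendsto' (fun r _ ↦ hderiv r)
    (hint.sub (hint_succ.const_mul b)) htendsto
  rw [integral_sub hint (hint_succ.const_mul b), integral_const_mul, integral_const_mul] at hFTC
  rw [eq_div_iff hb.ne']
  linarith

open scoped Nat in
lemma integral_Ioi_pow_mul_exp_neg_mul (hb : 0 < b) (n : ℕ) (a : ℝ) :
    ∫ r in Set.Ioi a, r ^ n * exp (-b * r) =
      n ! / b ^ (n + 1) * exp (-b * a) * ∑ k ∈ Finset.range (n + 1), (b * a) ^ k / k ! := by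
  induction n with
  | zero =>
    simp only [pow_zero, one_mul, integral_exp_mul_Ioi (neg_lt_zero.2 hb), neg_div_neg_eq]
    simp [div_eq_inv_mul]
  | succ n ih =>
    rw [integral_Ioi_pow_succ_mul_exp_neg_mul hb, ih, Finset.sum_range_succ _ (n + 1),
      Nat.factorial_succ]
    push_cast
    field_simp
    ring

lemma pow_mul_exp_mul_sub (n : ℕ) (α c r : ℝ) :
    r ^ n * exp (α * (r - c)) = exp (-α * c) * (r ^ n * exp (-(-α) * r)) := by
  rw [mul_left_comm, ← exp_add]
  ring_nf

lemma integrableOn_Ioi_pow_mul_exp_mul_sub {α : ℝ} (hα : α < 0) (n : ℕ) (a c : ℝ) :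
    IntegrableOn (fun r : ℝ ↦ r ^ n * exp (α * (r - c))) (Set.Ioi a) := by
  simp only [pow_mul_exp_mul_sub]
  exact (integrableOn_Ioi_pow_mul_exp_neg_mul (neg_pos.2 hα) n a).const_mul _

open scoped Nat in
lemma integral_Ioi_pow_mul_exp_mul_sub {α : ℝ} (hα : α < 0) (n : ℕ) (a c : ℝ) :
    ∫ r in Set.Ioi a, r ^ n * exp (α * (r - c)) =
      n ! / (-α) ^ (n + 1) * exp (α * (a - c)) *
        ∑ k ∈ Finset.range (n + 1), (-α * a) ^ k / k ! := by
  have hexp : exp (α * (a - c)) = exp (-α * c) * exp (-(-α) * a) := by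
    simpa using pow_mul_exp_mul_sub 0 α c a
  simp only [pow_mul_exp_mul_sub, integral_const_mul]
  rw [integral_Ioi_pow_mul_exp_neg_mul (neg_pos.2 hα), hexp]
  ring

end ExponentialTail

lemma compl_closedBall_zero_eq_norm_preimage (E : Type*) [SeminormedAddCommGroup E] (ρ : ℝ) :
    (closedBall (0 : E) ρ)ᶜ = norm ⁻¹' Set.Ioi ρ := by
  ext
  simp

section Radial

variable {E : Type*} [NormedAddCommGroup E] [NormedSpace ℝ E] [FiniteDimensional ℝ E]
  [Nontrivial E] [MeasurableSpace E] [BorelSpace E] (μ : Measure E) [μ.IsAddHaarMeasure]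
  {F : Type*} [NormedAddCommGroup F] [NormedSpace ℝ F] {t : Set ℝ}

lemma integrableOn_norm_preimage_fun_norm_iff (ht : MeasurableSet t) {f : ℝ → F} :
    IntegrableOn (fun x ↦ f ‖x‖) (norm ⁻¹' t) μ ↔
      IntegrableOn (fun r ↦ r ^ (Module.finrank ℝ E - 1) • f r) (t ∩ Set.Ioi 0) := by
  rw [← integrable_indicator_iff (ht.preimage measurable_norm)]
  change Integrable (fun x : E ↦ t.indicator f ‖x‖) μ ↔ _
  rw [integrable_fun_norm_addHaar, ← integrableOn_indicator_iff ht]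
  simp only [Set.indicator_smul]

lemma setIntegral_norm_preimage_fun_norm (ht : MeasurableSet t) (f : ℝ → F) :
    ∫ x in norm ⁻¹' t, f ‖x‖ ∂μ =
      Module.finrank ℝ E • μ.real (ball 0 1) •
        ∫ r in t ∩ Set.Ioi 0, r ^ (Module.finrank ℝ E - 1) • f r := by
  rw [← integral_indicator (ht.preimage measurable_norm)]
  change ∫ x : E, t.indicator f ‖x‖ ∂μ = _
  rw [integral_fun_norm_addHaar, Set.inter_comm, ← setIntegral_indicator ht]
  simp only [Set.indicator_smul]

lemma integrableOn_compl_closedBall_fun_norm_iff {ρ : ℝ} (hρ : 0 ≤ ρ) {f : ℝ → F} :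
    IntegrableOn (fun x ↦ f ‖x‖) (closedBall 0 ρ)ᶜ μ ↔
      IntegrableOn (fun r ↦ r ^ (Module.finrank ℝ E - 1) • f r) (Set.Ioi ρ) := by
  rw [compl_closedBall_zero_eq_norm_preimage,
    integrableOn_norm_preimage_fun_norm_iff μ measurableSet_Ioi,
    Set.inter_eq_left.2 (Set.Ioi_subset_Ioi hρ)]

lemma setIntegral_compl_closedBall_fun_norm {ρ : ℝ} (hρ : 0 ≤ ρ) (f : ℝ → F) :
    ∫ x in (closedBall 0 ρ)ᶜ, f ‖x‖ ∂μ =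
      Module.finrank ℝ E • μ.real (ball 0 1) •
        ∫ r in Set.Ioi ρ, r ^ (Module.finrank ℝ E - 1) • f r := by
  rw [compl_closedBall_zero_eq_norm_preimage,
    setIntegral_norm_preimage_fun_norm μ measurableSet_Ioi,
    Set.inter_eq_left.2 (Set.Ioi_subset_Ioi hρ)]

end Radial

lemma norm_sub_le_infDist {E : Type*} [SeminormedAddCommGroup E] {S : Set E} (hS : S.Nonempty)
    {R : ℝ} (hSR : S ⊆ closedBall 0 R) (x : E) : ‖x‖ - R ≤ infDist x S := by
  refine (le_infDist hS).2 fun y hy ↦ ?_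
  have hyR : ‖y‖ ≤ R := mem_closedBall_zero_iff.1 (hSR hy)
  have htri : ‖x‖ - ‖y‖ ≤ dist x y := dist_eq_norm x y ▸ norm_sub_norm_le x y
  linarith

section Comparison

variable {E : Type*} [NormedAddCommGroup E] [NormedSpace ℝ E] [FiniteDimensional ℝ E]
  [Nontrivial E] [MeasurableSpace E] [BorelSpace E] (μ : Measure E) [μ.IsAddHaarMeasure]
  {S : Set E} {R : ℝ}

lemma setIntegral_infDist_le_of_antitone (hS : S.Nonempty) (hSR : S ⊆ closedBall 0 R)
    {f : ℝ → ℝ} (hf : Antitone f) (hf_nonneg : ∀ s, 0 ≤ f s) {ρ : ℝ} (hρ : 0 ≤ ρ)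
    (hint : IntegrableOn (fun r ↦ r ^ (Module.finrank ℝ E - 1) * f (r - R)) (Set.Ioi ρ)) (δ : ℝ) :
    ∫ x in {x | δ ≤ infDist x S}, f (infDist x S) ∂μ ≤
      μ.real (ball 0 1) * (ρ ^ Module.finrank ℝ E * f δ +
        Module.finrank ℝ E * ∫ r in Set.Ioi ρ, r ^ (Module.finrank ℝ E - 1) * f (r - R)) := by
  classical
  let majorant : E → ℝ := (closedBall 0 ρ).piecewise (fun _ ↦ f δ) (fun x ↦ f (‖x‖ - R))
  have hball : IntegrableOn (fun _ : E ↦ f δ) (closedBall 0 ρ) μ :=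
    integrableOn_const measure_closedBall_lt_top.ne
  have htail : IntegrableOn (fun x : E ↦ f (‖x‖ - R)) (closedBall 0 ρ)ᶜ μ :=
    (integrableOn_compl_closedBall_fun_norm_iff μ hρ (f := fun r ↦ f (r - R))).2 hint
  have hmajorant : Integrable majorant μ :=
    Integrable.piecewise measurableSet_closedBall hball htail
  have hmajorant_nonneg (x : E) : 0 ≤ majorant x := by
    simp only [majorant, Set.piecewise]
    split_ifs <;> exact hf_nonneg _
  have hle : ∀ x ∈ {x | δ ≤ infDist x S}, f (infDist x S) ≤ majorant x := fun x hδx ↦ by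
    by_cases hx : x ∈ closedBall 0 ρ
    · simpa only [majorant, Set.piecewise_eq_of_mem _ _ _ hx] using hf hδx
    · simpa only [majorant, Set.piecewise_eq_of_notMem _ _ _ hx] using
        hf (norm_sub_le_infDist hS hSR x)
  calc ∫ x in {x | δ ≤ infDist x S}, f (infDist x S) ∂μ
      ≤ ∫ x in {x | δ ≤ infDist x S}, majorant x ∂μ :=
        integral_mono_of_nonneg (.of_forall fun _ ↦ hf_nonneg _) hmajorant.integrableOn
          (ae_restrict_of_forall_mem (measurableSet_le measurable_const measurable_infDist) hle)
    _ ≤ ∫ x, majorant x ∂μ := setIntegral_le_integral hmajorant (.of_forall hmajorant_nonneg)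
    _ = ∫ _ in closedBall 0 ρ, f δ ∂μ + ∫ x in (closedBall 0 ρ)ᶜ, f (‖x‖ - R) ∂μ :=
        integral_piecewise measurableSet_closedBall hball htail
    _ = _ := by
        rw [setIntegral_const, Measure.addHaar_real_closedBall μ _ hρ,
          setIntegral_compl_closedBall_fun_norm μ hρ (fun r ↦ f (r - R))]
        simp only [smul_eq_mul, nsmul_eq_mul]
        ring

open scoped Nat in
theorem stmt_3_general (hS : S.Nonempty) (hSR : S ⊆ closedBall 0 R) (δ : ℝ) {α : ℝ} (hα : α < 0) :
    ∫ x in {x | δ ≤ infDist x S}, exp (α * infDist x S) ∂μ ≤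
      μ.real (ball 0 1) *
        ((Module.finrank ℝ E)! / (-α) ^ Module.finrank ℝ E * exp (α * R) *
            ∑ k ∈ Finset.range (Module.finrank ℝ E), (-α * (2 * R)) ^ k / k ! +
          (2 * R) ^ Module.finrank ℝ E * exp (α * δ)) := by
  have hR : 0 ≤ R := nonempty_closedBall.1 (hS.mono hSR)
  obtain ⟨n, hn⟩ := Nat.exists_eq_add_one.2 (Module.finrank_pos (R := ℝ) (M := E))
  have hanti : Antitone fun s ↦ exp (α * s) :=
    fun _ _ h ↦ exp_le_exp.2 (mul_le_mul_of_nonpos_left h hα.le)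
  have hint := integrableOn_Ioi_pow_mul_exp_mul_sub hα (Module.finrank ℝ E - 1) (2 * R) R
  refine (setIntegral_infDist_le_of_antitone μ hS hSR hanti (fun _ ↦ (exp_pos _).le)
    (by positivity) hint δ).trans_eq ?_
  rw [integral_Ioi_pow_mul_exp_mul_sub hα, hn, Nat.add_sub_cancel, Nat.factorial_succ,
    two_mul, add_sub_cancel_right]
  push_cast
  ring

end Comparison

lemma volume_real_ball_fin_three (x : EuclideanSpace ℝ (Fin 3)) {r : ℝ} (hr : 0 ≤ r) :
    volume.real (ball x r) = 4 * π / 3 * r ^ 3 := by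
  rw [Measure.real, EuclideanSpace.volume_ball_fin_three, ENNReal.toReal_mul, ENNReal.toReal_pow,
    ENNReal.toReal_ofReal hr, ENNReal.toReal_ofReal (by positivity), mul_comm, mul_comm π]

/-- For a nonempty bounded `S ⊂ ℝ³` with `ε`-neighborhoods
`Θ_ε = {x : dist(x,S) < ε}`, if `Θ₁` is contained in the ball of radius `R > 1`
about the origin, then for `δ ∈ (0,1]` and `α < 0`:
`∫_{ℝ³∖Θ_δ} e^{α·dist(x,S)} dx ≤ 8π e^{αR}(1-2αR+2α²R²)/(-α)³ + (32π/3)R³ e^{αδ}`. -/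
theorem stmt_3
    (S : Set (EuclideanSpace ℝ (Fin 3)))
    (hS : S.Nonempty) (hSbdd : Bornology.IsBounded S)
    (Θ : ℝ → Set (EuclideanSpace ℝ (Fin 3)))
    (hΘ : ∀ ε, Θ ε = {x | infDist x S < ε})
    (R : ℝ) (hR : 1 < R) (hΘR : Θ 1 ⊆ Metric.ball (0 : EuclideanSpace ℝ (Fin 3)) R)
    (δ : ℝ) (hδ : δ ∈ Set.Ioc (0 : ℝ) 1) (α : ℝ) (hα : α < 0) :
    ∫ x in (Θ δ)ᶜ, Real.exp (α * infDist x S) ≤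
      8 * π * Real.exp (α * R) * (1 - 2 * α * R + 2 * α ^ 2 * R ^ 2) / (-α) ^ 3 +
        (32 * π / 3) * R ^ 3 * Real.exp (α * δ) := by
  have hSR : S ⊆ closedBall 0 R := fun x hx ↦
    ball_subset_closedBall (hΘR (by simp [hΘ, infDist_zero_of_mem hx]))
  have hcompl : (Θ δ)ᶜ = {x | δ ≤ infDist x S} := by
    ext
    simp [hΘ]
  rw [hcompl]
  refine (stmt_3_general volume hS hSR δ hα).trans_eq ?_
  rw [volume_real_ball_fin_three _ zero_le_one, finrank_euclideanSpace_fin]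
  simp only [Finset.sum_range_succ, Finset.sum_range_zero, Nat.factorial]
  push_cast
  ring
end

section
/- For every real μ ≥ 2 and every real t with 0 < |t| ≤ 1 one has ∫₀^∞ (1/(r+|t|)) · ((r²+|t|)/(r²+t²)) · e^{-μr} · r dr ≤ e^{μ|t|} (1 - log|t|). -/
open MeasureTheory Real

/-!
Write `s = |t|`. Apart from the exponential, the integrand is
`r / (r + s) + (1 - s) * (r * s / ((r + s) * (r ^ 2 + s ^ 2)))`. The first term is at most `1`. As
`(r + s) ^ 2 ≤ 2 * (r ^ 2 + s ^ 2)`, the second is at most `(1 - s)` times the derivative of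
`(r / (r + s)) ^ 2`, a function that increases from `0` to `1`. Hence the integral is at most
`1 - s + 1 / μ`, and `log s ≤ s - 1` gives the logarithmic bound.
-/

/-- The kernel `G_t(z)` with its exponential factor `e ^ (-μ|z|)` removed, as a function of
`s = |t|` and `r = |z|`. -/
noncomputable def kernelProfile (s r : ℝ) : ℝ :=
  (r + s)⁻¹ * ((r ^ 2 + s) / (r ^ 2 + s ^ 2))

section KernelProfile

variable {r s : ℝ}

lemma kernelProfile_mul_eq_add (h : r + s ≠ 0) (hs : s ≠ 0) :
    kernelProfile s r * r = r / (r + s) + (1 - s) * (r * s / ((r + s) * (r ^ 2 + s ^ 2))) := by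
  unfold kernelProfile
  field_simp
  ring

lemma kernelProfile_nonneg (hr : 0 ≤ r) (hs : 0 ≤ s) : 0 ≤ kernelProfile s r := by
  unfold kernelProfile
  positivity

lemma mul_div_add_mul_sq_add_sq_le (hr : 0 ≤ r) (hs : 0 < s) :
    r * s / ((r + s) * (r ^ 2 + s ^ 2)) ≤ 2 * r * s / (r + s) ^ 3 := by
  calc r * s / ((r + s) * (r ^ 2 + s ^ 2))
      = 2 * r * s / ((r + s) * (2 * (r ^ 2 + s ^ 2))) := by field_simp
    _ ≤ 2 * r * s / ((r + s) * (r + s) ^ 2) := by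
        gcongr
        exact add_sq_le
    _ = 2 * r * s / (r + s) ^ 3 := by ring

lemma kernelProfile_mul_le (hr : 0 ≤ r) (hs : 0 < s) (hs1 : s ≤ 1) {w : ℝ}
    (hw : 0 ≤ w) (hw1 : w ≤ 1) :
    kernelProfile s r * w * r ≤ w + (1 - s) * (2 * r * s / (r + s) ^ 3) := by
  have : 0 ≤ 1 - s := sub_nonneg.2 hs1
  have h_first : r / (r + s) ≤ 1 := div_le_one_of_le₀ (by linarith) (by positivity)
  calc kernelProfile s r * w * r
      = r / (r + s) * w + (1 - s) * (r * s / ((r + s) * (r ^ 2 + s ^ 2))) * w := by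
        rw [mul_right_comm, kernelProfile_mul_eq_add (by positivity) hs.ne', add_mul]
    _ ≤ 1 * w + (1 - s) * (2 * r * s / (r + s) ^ 3) * 1 := by
        gcongr ?_ * w + (1 - s) * ?_ * ?_
        exact mul_div_add_mul_sq_add_sq_le hr hs
    _ = w + (1 - s) * (2 * r * s / (r + s) ^ 3) := by rw [one_mul, mul_one]

lemma hasDerivAt_div_add (h : r + s ≠ 0) :
    HasDerivAt (fun x ↦ x / (x + s)) (s / (r + s) ^ 2) r := by
  refine ((hasDerivAt_id r).fun_div ((hasDerivAt_id r).add_const s) h).congr_deriv ?_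
  simp only [id_eq, one_mul, mul_one, add_sub_cancel_left]

lemma hasDerivAt_div_add_sq (h : r + s ≠ 0) :
    HasDerivAt (fun x ↦ (x / (x + s)) ^ 2) (2 * r * s / (r + s) ^ 3) r := by
  refine ((hasDerivAt_div_add h).fun_pow 2).congr_deriv ?_
  simp only [Nat.cast_ofNat, Nat.add_one_sub_one, pow_one]
  field_simp

end KernelProfile

lemma tendsto_div_add_atTop (s : ℝ) :
    Filter.Tendsto (fun x : ℝ ↦ x / (x + s)) Filter.atTop (nhds 1) := by
  have h_atTop := Filter.tendsto_atTop_add_const_right Filter.atTop s Filter.tendsto_id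
  have h_sub : Filter.Tendsto (fun x : ℝ ↦ 1 - s / (x + s)) Filter.atTop (nhds 1) := by
    simpa using (h_atTop.const_div_atTop s).const_sub 1
  refine h_sub.congr' ?_
  filter_upwards [h_atTop.eventually_ne_atTop 0] with x (hx : x + s ≠ 0)
  rw [one_sub_div hx, add_sub_cancel_right]

lemma integrableOn_Ioi_mul_div_add_pow_three {s : ℝ} (hs : 0 < s) :
    IntegrableOn (fun r ↦ 2 * r * s / (r + s) ^ 3) (Set.Ioi 0) := by
  refine integrableOn_Ioi_deriv_of_nonneg' (fun r (hr : 0 ≤ r) ↦ hasDerivAt_div_add_sq ?_)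
    (fun r (hr : 0 < r) ↦ ?_) ((tendsto_div_add_atTop s).pow 2)
  all_goals positivity

lemma integral_Ioi_mul_div_add_pow_three {s : ℝ} (hs : 0 < s) :
    ∫ r in Set.Ioi 0, 2 * r * s / (r + s) ^ 3 = 1 := by
  have h_deriv (r : ℝ) (hr : r ∈ Set.Ici 0) :
      HasDerivAt (fun x ↦ (x / (x + s)) ^ 2) (2 * r * s / (r + s) ^ 3) r :=
    hasDerivAt_div_add_sq (add_pos_of_nonneg_of_pos hr hs).ne'
  simpa using integral_Ioi_of_hasDerivAt_of_tendsto' h_deriv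
    (integrableOn_Ioi_mul_div_add_pow_three hs) ((tendsto_div_add_atTop s).pow 2)

lemma integral_Ioi_kernelProfile_mul_le {s : ℝ} (hs : 0 < s) (hs1 : s ≤ 1) {w : ℝ → ℝ}
    (hw : IntegrableOn w (Set.Ioi 0)) (hw0 : ∀ r > 0, 0 ≤ w r) (hw1 : ∀ r > 0, w r ≤ 1) :
    ∫ r in Set.Ioi 0, kernelProfile s r * w r * r ≤ (∫ r in Set.Ioi 0, w r) + (1 - s) := by
  have h_int := (integrableOn_Ioi_mul_div_add_pow_three hs).const_mul (1 - s)
  calc ∫ r in Set.Ioi 0, kernelProfile s r * w r * r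
      ≤ ∫ r in Set.Ioi 0, (w r + (1 - s) * (2 * r * s / (r + s) ^ 3)) := by
        refine integral_mono_of_nonneg ?_ (hw.add h_int) ?_
        all_goals filter_upwards [ae_restrict_mem measurableSet_Ioi] with r (hr : 0 < r)
        · exact mul_nonneg (mul_nonneg (kernelProfile_nonneg hr.le hs.le) (hw0 r hr)) hr.le
        · exact kernelProfile_mul_le hr.le hs hs1 (hw0 r hr) (hw1 r hr)
    _ = (∫ r in Set.Ioi 0, w r) + (1 - s) := by
        rw [integral_add hw h_int, integral_const_mul, integral_Ioi_mul_div_add_pow_three hs,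
          mul_one]

lemma integral_Ioi_kernelProfile_mul_exp_le {μ s : ℝ} (hμ : 0 < μ) (hs : 0 < s) (hs1 : s ≤ 1) :
    ∫ r in Set.Ioi 0, kernelProfile s r * exp (-μ * r) * r ≤ 1 / μ + (1 - s) := by
  have hμ' : -μ < 0 := neg_neg_of_pos hμ
  have h_exp : ∫ r in Set.Ioi 0, exp (-μ * r) = 1 / μ := by
    rw [integral_exp_mul_Ioi hμ', mul_zero, exp_zero, neg_div_neg_eq]
  rw [← h_exp]
  exact integral_Ioi_kernelProfile_mul_le hs hs1 (integrableOn_exp_mul_Ioi hμ' 0)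
    (fun r _ ↦ (exp_pos _).le)
    (fun r hr ↦ exp_le_one_iff.2 (mul_nonpos_of_nonpos_of_nonneg hμ'.le hr.le))

theorem stmt_5_general (μ t : ℝ) (hμ : 1 ≤ μ) (ht : 0 < |t|) (ht1 : |t| ≤ 1) :
    ∫ r in Set.Ioi (0 : ℝ),
        (r + |t|)⁻¹ * ((r ^ 2 + |t|) / (r ^ 2 + t ^ 2)) * Real.exp (-μ * r) * r ≤
      Real.exp (μ * |t|) * (1 - Real.log |t|) := by
  have hμ0 : 0 < μ := zero_lt_one.trans_le hμ
  have h_log : log |t| ≤ |t| - 1 := log_le_sub_one_of_pos ht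
  rw [← sq_abs t]
  calc _ ≤ 1 / μ + (1 - |t|) := integral_Ioi_kernelProfile_mul_exp_le hμ0 ht ht1
    _ ≤ 1 - log |t| := by linarith [div_le_one_of_le₀ hμ hμ0.le]
    _ ≤ exp (μ * |t|) * (1 - log |t|) :=
        le_mul_of_one_le_left (by linarith) (one_le_exp (by positivity))

/-- For `μ ≥ 2` and `0 < |t| ≤ 1`:
`∫₀^∞ (1/(r+|t|)) · ((r²+|t|)/(r²+t²)) · e^{-μr} · r dr ≤ e^{μ|t|}(1 - log|t|)`. -/
theorem stmt_5 (μ t : ℝ) (hμ : 2 ≤ μ) (ht : 0 < |t|) (ht1 : |t| ≤ 1) :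
    ∫ r in Set.Ioi (0 : ℝ),
        (r + |t|)⁻¹ * ((r ^ 2 + |t|) / (r ^ 2 + t ^ 2)) * Real.exp (-μ * r) * r ≤
      Real.exp (μ * |t|) * (1 - Real.log |t|) :=
  stmt_5_general μ t (by linarith) ht ht1
end

section
/- For every real μ > 0 and every real t ≠ 0 one has ∫_{ℝ²} ((|z|²+|t|)/(|z|²+t²)) · e^{-μ|z|} dz ≤ 2π (μ+1)/μ², where |z| is the Euclidean norm on ℝ². -/
open MeasureTheory Real

/-!
Write `r = |z|`. Since `2 r |t| ≤ r² + t²`, the rational factor of the kernel satisfies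
`(r² + |t|) / (r² + t²) ≤ 1 + 1 / (2r)` uniformly in `t`. In dimension at least two the singularity
`1 / r` is integrable, and in polar coordinates the integrals of `exp (-μ r)` and of
`exp (-μ r) / r` are values of the Gamma function.
-/

section RadialMoments

open Module Metric
open scoped Nat

lemma pow_pred_mul_rpow {d : ℕ} (hd : 0 < d) {r : ℝ} (hr : 0 < r) (s : ℝ) :
    r ^ (d - 1) * r ^ s = r ^ (s + d - 1) := by
  rw [← rpow_natCast, ← rpow_add hr, Nat.cast_pred hd]
  ring_nf

variable {E : Type*} [NormedAddCommGroup E] [NormedSpace ℝ E] [FiniteDimensional ℝ E]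
  [MeasurableSpace E] [BorelSpace E] (ν : Measure E) [ν.IsAddHaarMeasure] {p s b : ℝ}

lemma integrable_norm_rpow_mul_exp_neg_mul_norm_rpow [Nontrivial E]
    (hs : 0 < s + finrank ℝ E) (hp : 0 < p) (hb : 0 < b) :
    Integrable (fun x : E ↦ ‖x‖ ^ s * exp (-b * ‖x‖ ^ p)) ν := by
  rw [integrable_fun_norm_addHaar ν (f := fun r ↦ r ^ s * exp (-b * r ^ p))]
  refine (integrableOn_rpow_mul_exp_neg_mul_rpow (s := s + finrank ℝ E - 1) (by linarith) hp
    hb).congr_fun (fun r hr ↦ ?_) measurableSet_Ioi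
  rw [smul_eq_mul, ← mul_assoc, pow_pred_mul_rpow finrank_pos hr]

lemma integral_norm_rpow_mul_exp_neg_mul_norm_rpow [Nontrivial E]
    (hs : 0 < s + finrank ℝ E) (hp : 0 < p) (hb : 0 < b) :
    ∫ x : E, ‖x‖ ^ s * exp (-b * ‖x‖ ^ p) ∂ν =
      finrank ℝ E * ν.real (ball 0 1) *
        (b ^ (-(s + finrank ℝ E) / p) * (1 / p) * Gamma ((s + finrank ℝ E) / p)) := by
  have radial : ∫ r in Set.Ioi (0 : ℝ), r ^ (finrank ℝ E - 1) * (r ^ s * exp (-b * r ^ p)) =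
      ∫ r in Set.Ioi (0 : ℝ), r ^ (s + finrank ℝ E - 1) * exp (-b * r ^ p) :=
    setIntegral_congr_fun measurableSet_Ioi fun r hr ↦ by
      rw [← mul_assoc, pow_pred_mul_rpow finrank_pos hr]
  rw [integral_fun_norm_addHaar ν (fun r ↦ r ^ s * exp (-b * r ^ p))]
  simp only [nsmul_eq_mul, smul_eq_mul]
  rw [radial, integral_rpow_mul_exp_neg_mul_rpow hp (by linarith) hb, sub_add_cancel, ← mul_assoc]

lemma integrable_exp_neg_mul_norm [Nontrivial E] (hb : 0 < b) :
    Integrable (fun x : E ↦ exp (-b * ‖x‖)) ν := by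
  have hd : 0 < (0 : ℝ) + finrank ℝ E := by simpa using finrank_pos (R := ℝ) (M := E)
  simpa using integrable_norm_rpow_mul_exp_neg_mul_norm_rpow ν hd one_pos hb

lemma integral_exp_neg_mul_norm [Nontrivial E] (hb : 0 < b) :
    ∫ x : E, exp (-b * ‖x‖) ∂ν = ν.real (ball 0 1) * ((finrank ℝ E)! / b ^ finrank ℝ E) := by
  have hd : 0 < (0 : ℝ) + finrank ℝ E := by simpa using finrank_pos (R := ℝ) (M := E)
  have moment := integral_norm_rpow_mul_exp_neg_mul_norm_rpow ν hd one_pos hb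
  have hΓ : finrank ℝ E * Gamma (finrank ℝ E) = (finrank ℝ E)! := by
    rw [← Gamma_add_one (by simpa using hd.ne'), Gamma_nat_eq_factorial]
  simp only [rpow_zero, one_mul, rpow_one, zero_add, div_one, mul_one, rpow_neg hb.le,
    rpow_natCast] at moment
  rw [moment, ← hΓ]
  ring

lemma integrable_inv_norm_mul_exp_neg_mul_norm (hE : 1 < finrank ℝ E) (hb : 0 < b) :
    Integrable (fun x : E ↦ ‖x‖⁻¹ * exp (-b * ‖x‖)) ν := by
  have : Nontrivial E := nontrivial_of_finrank_pos (R := ℝ) (by lia)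
  have hd : 0 < (-1 : ℝ) + finrank ℝ E := by simpa using hE
  simpa [rpow_neg_one] using integrable_norm_rpow_mul_exp_neg_mul_norm_rpow ν hd one_pos hb

lemma integral_inv_norm_mul_exp_neg_mul_norm {n : ℕ} (hE : finrank ℝ E = n + 2) (hb : 0 < b) :
    ∫ x : E, ‖x‖⁻¹ * exp (-b * ‖x‖) ∂ν = ν.real (ball 0 1) * ((n + 2) * n ! / b ^ (n + 1)) := by
  have : Nontrivial E := nontrivial_of_finrank_pos (R := ℝ) (by lia)
  have hd : (-1 : ℝ) + finrank ℝ E = (n + 1 : ℕ) := by rw [hE]; push_cast; ring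
  have moment := integral_norm_rpow_mul_exp_neg_mul_norm_rpow ν (s := -1)
    (by rw [hd]; positivity) one_pos hb
  have hΓ : Gamma (n + 1 : ℕ) = n ! := by rw [Nat.cast_succ, Gamma_nat_eq_factorial]
  rw [hd, hE] at moment
  simp only [hΓ, rpow_neg_one, rpow_one, div_one, mul_one, rpow_neg hb.le, rpow_natCast] at moment
  rw [moment]
  push_cast
  ring

end RadialMoments

section NormalDerivKernel

open Module Metric
open scoped Nat

lemma sq_add_abs_div_sq_add_sq_le {r : ℝ} (hr : 0 < r) (t : ℝ) :
    (r ^ 2 + |t|) / (r ^ 2 + t ^ 2) ≤ 1 + r⁻¹ / 2 := by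
  have amgm : 2 * r * |t| ≤ r ^ 2 + t ^ 2 := by simpa using two_mul_le_add_sq r |t|
  have h_abs : |t| ≤ r⁻¹ / 2 * (r ^ 2 + t ^ 2) := by
    calc |t| = r⁻¹ / 2 * (2 * r * |t|) := by field_simp
      _ ≤ r⁻¹ / 2 * (r ^ 2 + t ^ 2) := by gcongr
  rw [div_le_iff₀ (by positivity)]
  linarith [sq_nonneg t]

variable {E : Type*} [NormedAddCommGroup E]

/-- The kernel `F_t(z)` with decay rate `μ` that arises from the normal derivative of a
single-layer potential, on an arbitrary normed group. -/
noncomputable def normalDerivKernel (μ t : ℝ) (z : E) : ℝ :=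
  (‖z‖ ^ 2 + |t|) / (‖z‖ ^ 2 + t ^ 2) * exp (-μ * ‖z‖)

lemma normalDerivKernel_nonneg (μ t : ℝ) (z : E) : 0 ≤ normalDerivKernel μ t z := by
  unfold normalDerivKernel
  positivity

lemma normalDerivKernel_le (μ t : ℝ) {z : E} (hz : z ≠ 0) :
    normalDerivKernel μ t z ≤ exp (-μ * ‖z‖) + ‖z‖⁻¹ * exp (-μ * ‖z‖) / 2 := by
  calc normalDerivKernel μ t z
      ≤ (1 + ‖z‖⁻¹ / 2) * exp (-μ * ‖z‖) := by
        unfold normalDerivKernel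
        gcongr
        exact sq_add_abs_div_sq_add_sq_le (norm_pos_iff.2 hz) t
    _ = exp (-μ * ‖z‖) + ‖z‖⁻¹ * exp (-μ * ‖z‖) / 2 := by ring

lemma measurable_normalDerivKernel [MeasurableSpace E] [OpensMeasurableSpace E] (μ t : ℝ) :
    Measurable (normalDerivKernel μ t : E → ℝ) := by
  unfold normalDerivKernel
  fun_prop

variable [NormedSpace ℝ E] [FiniteDimensional ℝ E] [MeasurableSpace E] [BorelSpace E]
  (ν : Measure E) [ν.IsAddHaarMeasure] {μ : ℝ}

lemma integrable_normalDerivKernel (hE : 1 < finrank ℝ E) (hμ : 0 < μ) (t : ℝ) :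
    Integrable (normalDerivKernel μ t) ν := by
  have : Nontrivial E := nontrivial_of_finrank_pos (R := ℝ) (by lia)
  refine ((integrable_exp_neg_mul_norm ν hμ).add
    ((integrable_inv_norm_mul_exp_neg_mul_norm ν hE hμ).div_const 2)).mono'
      (measurable_normalDerivKernel μ t).aestronglyMeasurable ?_
  filter_upwards [ν.ae_ne 0] with z hz
  rw [norm_of_nonneg (normalDerivKernel_nonneg μ t z)]
  exact normalDerivKernel_le μ t hz

theorem stmt_6_general {n : ℕ} (hE : finrank ℝ E = n + 2) (hμ : 0 < μ) (t : ℝ) :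
    ∫ z : E, normalDerivKernel μ t z ∂ν ≤
      ν.real (ball 0 1) * ((n + 2)! / μ ^ (n + 2) + (n + 2) * n ! / (2 * μ ^ (n + 1))) := by
  have hE_gt : 1 < finrank ℝ E := by lia
  have : Nontrivial E := nontrivial_of_finrank_pos (R := ℝ) (by lia)
  have hexp := integrable_exp_neg_mul_norm ν hμ
  have hinv := (integrable_inv_norm_mul_exp_neg_mul_norm ν hE_gt hμ).div_const 2
  calc ∫ z : E, normalDerivKernel μ t z ∂ν
      ≤ ∫ z : E, (exp (-μ * ‖z‖) + ‖z‖⁻¹ * exp (-μ * ‖z‖) / 2) ∂ν :=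
        integral_mono_ae (integrable_normalDerivKernel ν hE_gt hμ t) (hexp.add hinv)
          ((ν.ae_ne 0).mono fun _ hz ↦ normalDerivKernel_le μ t hz)
    _ = ∫ z : E, exp (-μ * ‖z‖) ∂ν + (∫ z : E, ‖z‖⁻¹ * exp (-μ * ‖z‖) ∂ν) / 2 := by
        rw [integral_add hexp hinv, integral_div]
    _ = _ := by
        rw [integral_exp_neg_mul_norm ν hμ, integral_inv_norm_mul_exp_neg_mul_norm ν hE hμ, hE]
        ring

end NormalDerivKernel

lemma volume_real_unitBall_euclideanSpace_two :
    volume.real (Metric.ball (0 : EuclideanSpace ℝ (Fin 2)) 1) = π := by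
  simp [Measure.real, pi_nonneg]

/-- For `μ > 0` and `t ≠ 0`:
`∫_{ℝ²} ((|z|²+|t|)/(|z|²+t²)) · e^{-μ|z|} dz ≤ 2π(μ+1)/μ²`. -/
theorem stmt_6 (μ t : ℝ) (hμ : 0 < μ) (ht : t ≠ 0) :
    ∫ z : EuclideanSpace ℝ (Fin 2),
        ((‖z‖ ^ 2 + |t|) / (‖z‖ ^ 2 + t ^ 2)) * Real.exp (-μ * ‖z‖) ≤
      2 * π * (μ + 1) / μ ^ 2 := by
  calc ∫ z : EuclideanSpace ℝ (Fin 2), normalDerivKernel μ t z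
      ≤ π * (2 / μ ^ 2 + 2 / (2 * μ)) := by
        simpa [volume_real_unitBall_euclideanSpace_two] using
          stmt_6_general volume (n := 0) (finrank_euclideanSpace_fin (n := 2)) hμ t
    _ = π * (μ + 2) / μ ^ 2 := by field_simp; ring
    _ ≤ 2 * π * (μ + 1) / μ ^ 2 := by gcongr ?_ / _; linarith [mul_pos pi_pos hμ]
end
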